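/- Let N ∈ ℕ and let q, b ∈ ℂ satisfy (q;q)_N ≠ 0 and (bq;q)_N ≠ 0. Then Σ_{n=0}^{N} q^n / ((bq;q)_n (q;q)_n) = 1/((bq;q)_N (q;q)_N) · Σ_{n=0}^{N} [N,n]_q (q;q)_n (−b)^n q^{n(n+1)/2}. -/

import Mathlib

/-!
Let `P_N(b) = ∑_{n ≤ N} (q;q)_N / (q;q)_{N-n} (-b)^n q^{n(n+1)/2}` be the sum on the right-hand side.
Splitting off its first term gives `P_{N+1}(b) = 1 - b q (1 - q^{N+1}) P_N(bq)`, and induction on `N`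
for all `b` simultaneously turns this into a recurrence with `b` fixed,
`P_{N+1}(b) = (1 - b q^{N+1}) (1 - q^{N+1}) P_N(b) + q^{N+1}` (`finePoly_succ`).
Divided by `(bq;q)_{N+1} (q;q)_{N+1}`, the latter says that the right-hand side grows from `N` to
`N + 1` by exactly the new term of the left-hand side.
-/

open Finset

/-- The q-Pochhammer symbol (z; q)_n = prod_{j=0}^{n-1} (1 - z q^j). -/
noncomputable def qPoch (q z : ℂ) (n : ℕ) : ℂ :=
  ∏ j ∈ Finset.range n, (1 - z * q ^ j)

/-- The Gaussian binomial coefficient [N, n]_q = (q;q)_N / ((q;q)_n (q;q)_{N-n}). -/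
noncomputable def qBinom (q : ℂ) (N n : ℕ) : ℂ :=
  qPoch q q N / (qPoch q q n * qPoch q q (N - n))

/-- The finite analogue of Fine's function,
F_N(a, b; t) = sum_{n=0}^{N} [N,n]_q (aq;q)_n (t;q)_{N-n} (q;q)_n t^n / ((bq;q)_n (t;q)_N). -/
noncomputable def fineF (q a b t : ℂ) (N : ℕ) : ℂ :=
  ∑ n ∈ Finset.range (N + 1),
    qBinom q N n * (qPoch q (a * q) n * qPoch q t (N - n) * qPoch q q n * t ^ n) /
      (qPoch q (b * q) n * qPoch q t N)

/-- The polynomial `P_N(b)`, defined by its recurrence `P_{N+1}(b) = 1 - b q (1 - q^{N+1}) P_N(bq)`;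
this form needs no division by `q`-Pochhammer symbols. -/
noncomputable def finePoly (q : ℂ) : ℕ → ℂ → ℂ
  | 0, _ => 1
  | N + 1, b => 1 - b * q * (1 - q ^ (N + 1)) * finePoly q N (b * q)

/-- The recurrence with `b` fixed. In the inductive step the induction hypothesis at `bq` leaves
`finePoly q N (b * q)`, which the defining recurrence expresses through `finePoly q (N + 1) b`. -/
theorem finePoly_succ (q : ℂ) (N : ℕ) (b : ℂ) :
    finePoly q (N + 1) b =
      (1 - b * q ^ (N + 1)) * (1 - q ^ (N + 1)) * finePoly q N b + q ^ (N + 1) := by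
  induction N generalizing b with
  | zero => simp only [finePoly]; ring
  | succ N ih =>
    have h : finePoly q (N + 1) b = 1 - b * q * (1 - q ^ (N + 1)) * finePoly q N (b * q) := rfl
    rw [finePoly, ih (b * q), h]
    ring

theorem qPoch_succ (q z : ℂ) (n : ℕ) : qPoch q z (n + 1) = qPoch q z n * (1 - z * q ^ n) :=
  Finset.prod_range_succ _ _

theorem qPoch_ne_zero_of_le {q z : ℂ} {n N : ℕ} (hn : n ≤ N) (h : qPoch q z N ≠ 0) :
    qPoch q z n ≠ 0 := by
  rw [qPoch, Finset.prod_ne_zero_iff] at h ⊢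
  exact fun j hj => h j (Finset.range_mono hn hj)

/-- The explicit form of `finePoly`. Nonvanishing of `(q;q)_N` makes the term `n = 0` equal to `1`;
the remaining terms form the shifted sum at `bq`. -/
theorem sum_eq_finePoly (q : ℂ) (N : ℕ) (b : ℂ) (hq : qPoch q q N ≠ 0) :
    ∑ n ∈ Finset.range (N + 1),
      qPoch q q N / qPoch q q (N - n) * (-b) ^ n * q ^ (n * (n + 1) / 2) = finePoly q N b := by
  induction N generalizing b with
  | zero => simp [finePoly, qPoch]
  | succ N ih =>
    rw [Finset.sum_range_succ', finePoly, ← ih (b * q) (qPoch_ne_zero_of_le N.le_succ hq),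
      Finset.mul_sum]
    simp only [Nat.sub_zero, div_self hq, pow_zero, Nat.zero_mul, Nat.zero_div, mul_one]
    rw [add_comm, sub_eq_add_neg, ← Finset.sum_neg_distrib]
    congr 1
    refine Finset.sum_congr rfl fun n _ => ?_
    have e : (n + 1) * (n + 1 + 1) / 2 = n * (n + 1) / 2 + (n + 1) := by
      rw [show (n + 1) * (n + 1 + 1) = n * (n + 1) + (n + 1) * 2 by ring]
      exact Nat.add_mul_div_right _ _ two_pos
    rw [e, Nat.add_sub_add_right, qPoch_succ, ← neg_mul b q, mul_pow]
    ring

theorem poch_sum_compare (N : ℕ) (q b : ℂ)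
    (hq : qPoch q q N ≠ 0) (hb : qPoch q (b * q) N ≠ 0) :
    ∑ n ∈ Finset.range (N + 1), q ^ n / (qPoch q (b * q) n * qPoch q q n) =
      1 / (qPoch q (b * q) N * qPoch q q N) *
        ∑ n ∈ Finset.range (N + 1),
          qBinom q N n * qPoch q q n * (-b) ^ n * q ^ (n * (n + 1) / 2) := by
  have hne : ∀ n ≤ N, qPoch q q n ≠ 0 := fun n hn => qPoch_ne_zero_of_le hn hq
  have hR : ∑ n ∈ Finset.range (N + 1),
      qBinom q N n * qPoch q q n * (-b) ^ n * q ^ (n * (n + 1) / 2) = finePoly q N b := by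
    rw [← sum_eq_finePoly q N b hq]
    refine Finset.sum_congr rfl fun n hn => ?_
    have h1 := hne n (Nat.lt_succ_iff.mp (Finset.mem_range.mp hn))
    have h2 := hne (N - n) (Nat.sub_le _ _)
    rw [qBinom]
    field_simp
  rw [hR]
  clear hR hne
  induction N with
  | zero => simp [finePoly, qPoch]
  | succ N ih =>
    have hq' := qPoch_ne_zero_of_le N.le_succ hq
    have hb' := qPoch_ne_zero_of_le N.le_succ hb
    rw [Finset.sum_range_succ, ih hq' hb', finePoly_succ]
    have e1 : qPoch q q (N + 1) = qPoch q q N * (1 - q ^ (N + 1)) := by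
      rw [qPoch_succ]; ring
    have e2 : qPoch q (b * q) (N + 1) = qPoch q (b * q) N * (1 - b * q ^ (N + 1)) := by
      rw [qPoch_succ]; ring
    rw [e1] at hq ⊢
    rw [e2] at hb ⊢
    have h1 := right_ne_zero_of_mul hq
    have h2 := right_ne_zero_of_mul hb
    generalize q ^ (N + 1) = x at *
    field_simp
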